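/- Let K ⊆ ℝ² be a Minkowski centered convex body with s(K) > φ and write s = s(K). Then there exist a point p ∈ bd(K) ∩ bd(−K) and points p¹, p², p³ ∈ ℝ² such that the convex body K̄ := conv{p, −p, p², p³, −s·p¹, −s·p², −s·p³} is Minkowski centered, p¹, p², p³ form a well-spread triple of asymmetry points of K̄, the affine lines through {−p, p³} and through {p, p²} meet in a single point d¹ with p¹ = −γ·d¹ for some 0 < γ < 1, and moreover: (i) s(K̄) = s(K); (ii) τ(K̄) ≥ τ(K); (iii) p ∈ bd(K̄ ∩ (−K̄)) ∩ τ(K̄)·bd((K̄ − K̄)/2). -/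

import Mathlib

open scoped Pointwise RealInnerProductSpace
open Set

noncomputable section

abbrev E2 := EuclideanSpace ℝ (Fin 2)

/-- A convex body: compact convex set with nonempty interior. -/
def IsConvexBody (K : Set E2) : Prop :=
  Convex ℝ K ∧ IsCompact K ∧ (interior K).Nonempty

/-- circumradius `R(K,C)` -/
def circum (K C : Set E2) : ℝ :=
  sInf {ρ : ℝ | 0 < ρ ∧ ∃ t : E2, K ⊆ ρ • C + {t}}

/-- inradius `r(K,C)` -/
def inrad (K C : Set E2) : ℝ :=
  sSup {ρ : ℝ | 0 < ρ ∧ ∃ t : E2, ρ • C + {t} ⊆ K}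

/-- width `w(K,C)` -/
def widthB (K C : Set E2) : ℝ := 2 * inrad (K - K) (C - C)

/-- diameter `D(K,C)` -/
def diamB (K C : Set E2) : ℝ := 2 * circum (K - K) (C - C)

/-- Minkowski asymmetry `s(K)` -/
def minkAsym (K : Set E2) : ℝ :=
  sInf {ρ : ℝ | 0 < ρ ∧ ∃ c : E2, K - {c} ⊆ ρ • ({c} - K)}

/-- `K` is Minkowski centered -/
def MinkCentered (K : Set E2) : Prop := K ⊆ minkAsym K • (-K)

/-- `τ(K)`: smallest `ρ > 0` with `K ∩ (-K) ⊆ ρ • ((K-K)/2)` -/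
def tauB (K : Set E2) : ℝ :=
  sInf {ρ : ℝ | 0 < ρ ∧ K ∩ (-K) ⊆ ρ • ((2:ℝ)⁻¹ • (K - K))}

/-- golden ratio -/
def phiR : ℝ := (1 + Real.sqrt 5) / 2

def cExpr2 (s : ℝ) : ℝ :=
  (s^2+1)^2 / ((s^2-1) * (s^2+2*s-1+2*Real.sqrt (s*(s^2-1))))

def cExpr3 (s : ℝ) : ℝ := 2*(s^2-2*s-1) / ((s-3)*(s+1))

/-- `ŝ`: the unique `s ∈ (φ,2)` where the two expressions agree. -/
def sHat : ℝ := sInf {s : ℝ | phiR < s ∧ s < 2 ∧ cExpr2 s = cExpr3 s}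

def cFun (s : ℝ) : ℝ :=
  if s ≤ phiR then 1 else if s ≤ sHat then cExpr2 s else cExpr3 s

/-- polar body -/
def polarBody (K : Set E2) : Set E2 := {y | ∀ x ∈ K, (inner ℝ x y : ℝ) ≤ 1}

/-- `γ(K)` -/
def gammaB (K : Set E2) : ℝ :=
  sInf {ρ : ℝ | 0 < ρ ∧
    polarBody ((2:ℝ)⁻¹ • (polarBody K - polarBody K)) ⊆ ρ • convexHull ℝ (K ∪ -K)}

/-- positive hull of two points -/
def posHull2 (a b : E2) : Set E2 := {x | ∃ α β : ℝ, 0 ≤ α ∧ 0 ≤ β ∧ x = α • a + β • b}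

/-- asymmetry point of `K`: a point of `bd(K) ∩ bd(−(1/s(K))·K)` -/
def IsAsymPoint (K : Set E2) (p : E2) : Prop :=
  p ∈ frontier K ∧ p ∈ frontier ((-(minkAsym K)⁻¹) • K)

/-- a well-spread triple of asymmetry points -/
def WellSpread (K : Set E2) (p1 p2 p3 : E2) : Prop :=
  IsAsymPoint K p1 ∧ IsAsymPoint K p2 ∧ IsAsymPoint K p3 ∧
  ∃ a1 a2 a3 : E2, a1 ≠ 0 ∧ a2 ≠ 0 ∧ a3 ≠ 0 ∧
    (∀ x ∈ K, (inner ℝ a1 x : ℝ) ≤ inner ℝ a1 p1) ∧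
    (∀ x ∈ K, (inner ℝ a2 x : ℝ) ≤ inner ℝ a2 p2) ∧
    (∀ x ∈ K, (inner ℝ a3 x : ℝ) ≤ inner ℝ a3 p3) ∧
    (0:E2) ∈ interior (convexHull ℝ {p1, p2, p3}) ∧
    (0:E2) ∈ convexHull ℝ {a1, a2, a3}

/-- two points of `bd(K) ∩ bd(-K)` are consecutive -/
def Consecutive (K : Set E2) (z1 z2 : E2) : Prop :=
  ¬ ∃ z, z ∈ frontier K ∩ frontier (-K) ∧ z ∈ interior (posHull2 z1 z2)

/-- point of the plane from coordinates -/
def pt (x y : ℝ) : E2 := (WithLp.equiv 2 (Fin 2 → ℝ)).symm ![x, y]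

/-- the golden house -/
def goldenHouse : Set E2 :=
  convexHull ℝ {pt 1 0, pt (-1) 0, pt 1 (-1), pt (-1) (-1), pt 0 phiR}

/-!
A body of asymmetry `s` contains points `p 0, p 1, p 2` and `-s • p i`, with functionals supporting
it at the `p i` and having `0` in their convex hull. Up to sign and renumbering, a point `q` of
`K ∩ -K` is `β • p 1 - α • p 2` with `0 ≤ α ≤ β`, and a chord of `K` parallel to `q` puts `q` into
a multiple of `(K - K) / 2` that depends only on `s, α, β`. The position of `-s • p 0` restricts
`(α, β)` to a compact set, on which the multiple has a maximum `M`; the remaining `(α, β)` give at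
most the value at a vertex of this set. Hence `τ(K) ≤ M`.

Conversely, `K̄` is determined by `s`, `p`, a maximising `(α, β)` and any basis `(p², p³)` in which
`p = β • p² - α • p³`. Its points `p¹, p², p³` are again a system of this kind, which gives its
asymmetry and `τ(K̄) ≤ M`, and a functional attaining its width at a chord parallel to `p` gives
`M ≤ τ(K̄)`. Hence `p` may be any nonzero point of `bd K ∩ bd (-K)`.
-/

/-! ### Convex sets -/

section RealModule

variable {E : Type*} [AddCommGroup E] [Module ℝ E]

theorem smul_subset_smul_of_le {C : Set E} (hC : Convex ℝ C) (h0 : (0 : E) ∈ C) {r t : ℝ}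
    (hr : 0 ≤ r) (ht : 0 < t) (hrt : r ≤ t) : r • C ⊆ t • C := by
  rintro _ ⟨x, hx, rfl⟩
  refine ⟨(r / t) • x, hC.smul_mem_of_zero_mem h0 hx ⟨by positivity, (div_le_one ht).2 hrt⟩, ?_⟩
  simp only [smul_smul, mul_div_cancel₀ _ ht.ne']

theorem neg_inv_smul_mem {K : Set E} {s : ℝ} (hs : s ≠ 0) (hK : K ⊆ s • -K) {q : E}
    (hq : q ∈ K) : -s⁻¹ • q ∈ K := by
  simpa only [mem_smul_set_iff_inv_smul_mem₀ hs, mem_neg, neg_smul] using hK hq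

theorem smul_add_smul_mem_of_add_le_one {C : Set E} (hC : Convex ℝ C) (h0 : (0 : E) ∈ C) {x y : E}
    (hx : x ∈ C) (hy : y ∈ C) {u v : ℝ} (hu : 0 ≤ u) (hv : 0 ≤ v) (huv : u + v ≤ 1) :
    u • x + v • y ∈ C := by
  have hmem := hC.sum_mem (t := Finset.univ) (w := ![u, v, 1 - (u + v)]) (z := ![x, y, 0])
    (by simp [Fin.forall_fin_succ, hu, hv, huv]) (by simp [Fin.sum_univ_three])
    (by simp [Fin.forall_fin_succ, hx, hy, h0])
  simpa [Fin.sum_univ_three] using hmem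

theorem div_two_smul_sub_mem {K : Set E} (hK : Convex ℝ K) (h0 : (0 : E) ∈ K) {x y : E}
    (hx : x ∈ K) (hy : y ∈ K) {r t : ℝ} (hr : 0 ≤ r) (ht : 0 < t) (hrt : r ≤ t) :
    (r / 2) • (x - y) ∈ t • ((2 : ℝ)⁻¹ • (K - K)) := by
  refine smul_subset_smul_of_le ((hK.sub hK).smul _) ?_ hr ht hrt
    ⟨_, ⟨_, sub_mem_sub hx hy, rfl⟩, ?_⟩
  · exact ⟨0, ⟨0, h0, 0, h0, sub_zero 0⟩, smul_zero _⟩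
  · simp only [smul_smul, div_eq_mul_inv]

theorem exists_perm_eq_smul_sub_smul {p : Fin 3 → E}
    (hp : Submodule.span ℝ (range p) = ⊤) {μ : Fin 3 → ℝ} (hμ : ∀ i, 0 < μ i)
    (hμp : ∑ i, μ i • p i = 0) (x : E) :
    ∃ (σ : Equiv.Perm (Fin 3)) (α β : ℝ), 0 ≤ α ∧ 0 ≤ β ∧ x = β • p (σ 2) - α • p (σ 0) := by
  obtain ⟨c, rfl⟩ := (Submodule.mem_span_range_iff_exists_fun ℝ).1 (hp ▸ Submodule.mem_top : x ∈ _)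
  let t : Fin 3 → ℝ := fun i ↦ c i / μ i
  let σ := Tuple.sort t
  have hmono : Monotone (t ∘ σ) := Tuple.monotone_sort t
  have hct : ∀ i, c i = t i * μ i := fun i ↦ (div_mul_cancel₀ _ (hμ i).ne').symm
  refine ⟨σ, (t (σ 1) - t (σ 0)) * μ (σ 0), (t (σ 2) - t (σ 1)) * μ (σ 2),
    mul_nonneg (sub_nonneg.2 (hmono (by decide : (0 : Fin 3) ≤ 1))) (hμ _).le,
    mul_nonneg (sub_nonneg.2 (hmono (by decide : (1 : Fin 3) ≤ 2))) (hμ _).le, ?_⟩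
  calc ∑ i, c i • p i = ∑ i, c i • p i - t (σ 1) • ∑ i, μ i • p i := by
        rw [hμp, smul_zero, sub_zero]
    _ = ∑ i, ((t i - t (σ 1)) * μ i) • p i := by
        simp only [Finset.smul_sum, ← Finset.sum_sub_distrib, smul_smul, ← sub_smul, hct, sub_mul]
    _ = ∑ i, ((t (σ i) - t (σ 1)) * μ (σ i)) • p (σ i) := (Equiv.sum_comp σ _).symm
    _ = _ := by
        rw [Fin.sum_univ_three]
        module

theorem exists_basis_eq_smul_sub_smul {k V : Type*} [Field k] [AddCommGroup V] [Module k V]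
    (hV : Module.finrank k V = 2) {p : V} (hp : p ≠ 0) {α : k} (hα : α ≠ 0) (β : k) :
    ∃ b : Module.Basis (Fin 2) k V, p = β • b 0 - α • b 1 := by
  obtain ⟨v, hv⟩ := exists_linearIndependent_pair_of_one_lt_finrank (hV ▸ one_lt_two) hp
  have hli : LinearIndependent k ![v, α⁻¹ • (β • v - p)] := by
    rw [LinearIndependent.pair_iff] at hv ⊢
    intro x y hxy
    obtain ⟨hy, hx⟩ := hv (-(y * α⁻¹)) (x + y * α⁻¹ * β) (by rw [← hxy]; module)
    have hy0 : y = 0 := by simpa [hα] using hy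
    exact ⟨by simpa [hy0] using hx, hy0⟩
  refine ⟨basisOfLinearIndependentOfCardEqFinrank hli (by simp [hV]), ?_⟩
  simp [smul_smul, hα]

end RealModule

section ConvexGeometry

open scoped Topology

variable {E : Type*} [NormedAddCommGroup E] [NormedSpace ℝ E]

theorem convexHull_eq_iUnion_image_stdSimplex [FiniteDimensional ℝ E] (A : Set E) :
    convexHull ℝ A = ⋃ k ∈ Iic (Module.finrank ℝ E + 1),
      (fun z : (Fin k → ℝ) × (Fin k → E) ↦ ∑ i, z.1 i • z.2 i) ''
        (stdSimplex ℝ (Fin k) ×ˢ univ.pi fun _ ↦ A) := by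
  refine Subset.antisymm (fun x hx ↦ ?_) (iUnion₂_subset fun k _ ↦ ?_)
  · obtain ⟨ι, _, z, w, hzA, hz, hw, hw1, rfl⟩ := eq_pos_convex_span_of_mem_convexHull hx
    have hcard : Fintype.card ι ≤ Module.finrank ℝ E + 1 :=
      hz.card_le_finrank_succ.trans (Nat.succ_le_succ (Submodule.finrank_le _))
    let e := (Fintype.equivFin ι).symm
    refine mem_iUnion₂_of_mem (i := Fintype.card ι) hcard ⟨(w ∘ e, z ∘ e), ⟨⟨?_, ?_⟩, ?_⟩, ?_⟩
    · exact fun i ↦ (hw _).le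
    · simpa only [Function.comp_apply, e.sum_comp] using hw1
    · exact fun i _ ↦ hzA (mem_range_self _)
    · exact e.sum_comp fun i ↦ w i • z i
  · rintro _ ⟨⟨w, z⟩, ⟨⟨hw, hw1⟩, hz⟩, rfl⟩
    exact (convex_convexHull ℝ A).sum_mem (fun i _ ↦ hw i) hw1
      fun i _ ↦ subset_convexHull ℝ A (hz i (mem_univ i))

theorem isCompact_convexHull [FiniteDimensional ℝ E] {A : Set E} (hA : IsCompact A) :
    IsCompact (convexHull ℝ A) := by
  rw [convexHull_eq_iUnion_image_stdSimplex]
  exact (finite_Iic _).isCompact_biUnion fun k _ ↦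
    ((isCompact_stdSimplex ℝ (Fin k)).prod (isCompact_univ_pi fun _ ↦ hA)).image (by fun_prop)

theorem exists_forall_eq_apply_of_bidual [FiniteDimensional ℝ E]
    (Φ : StrongDual ℝ (StrongDual ℝ E)) : ∃ v : E, ∀ f : StrongDual ℝ E, Φ f = f v :=
  ⟨(Module.evalEquiv ℝ E).symm
      (Φ.toLinearMap ∘ₗ (LinearMap.toContinuousLinearMap (E := E) (F' := ℝ)).toLinearMap),
    fun f ↦ .symm <| (Module.apply_evalEquiv_symm_apply ℝ E f.toLinearMap _).trans rfl⟩

theorem apply_lt_of_mem_interior {C : Set E} {f : StrongDual ℝ E} (hf : f ≠ 0) {c : ℝ}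
    (hle : ∀ y ∈ C, f y ≤ c) {x : E} (hx : x ∈ interior C) : f x < c := by
  have hsub : f '' interior C ⊆ interior (Iic c) :=
    interior_maximal (image_subset_iff.2 fun y hy ↦ hle y (interior_subset hy))
      (f.isOpenMap_of_ne_zero hf _ isOpen_interior)
  simpa only [interior_Iic, mem_Iio] using hsub (mem_image_of_mem f hx)

theorem mem_frontier_of_forall_apply_le {C : Set E} {f : StrongDual ℝ E} (hf : f ≠ 0) {x : E}
    (hx : x ∈ C) (hle : ∀ y ∈ C, f y ≤ f x) : x ∈ frontier C :=
  ⟨subset_closure hx, fun hxi ↦ (apply_lt_of_mem_interior hf hle hxi).false⟩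

theorem apply_le_of_mem_convexHull {A : Set E} (f : StrongDual ℝ E) {c : ℝ}
    (hle : ∀ y ∈ A, f y ≤ c) {x : E} (hx : x ∈ convexHull ℝ A) : f x ≤ c :=
  convexHull_min hle (convex_halfSpace_le f.toLinearMap.isLinear c) hx

theorem apply_le_of_mem_half_smul_sub {K : Set E} {f : StrongDual ℝ E} {u l : ℝ}
    (hu : ∀ x ∈ K, f x ≤ u) (hl : ∀ x ∈ K, -l ≤ f x) {x : E} (hx : x ∈ (2 : ℝ)⁻¹ • (K - K)) :
    f x ≤ (u + l) / 2 := by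
  obtain ⟨_, ⟨x, hx, y, hy, rfl⟩, rfl⟩ := hx
  simp only [map_smul, map_sub, smul_eq_mul]
  linarith [hu x hx, hl y hy]

theorem mem_smul_frontier_of_apply_eq {C : Set E} {f : StrongDual ℝ E} (hf : f ≠ 0) {M c : ℝ}
    (hM : M ≠ 0) (hle : ∀ x ∈ C, f x ≤ c) {p : E} (hp : p ∈ M • C) (hfp : f p = M * c) :
    p ∈ M • frontier C := by
  obtain ⟨x, hx, rfl⟩ := hp
  have hfx : f x = c := mul_left_cancel₀ hM (by simpa using hfp)
  exact smul_mem_smul_set (mem_frontier_of_forall_apply_le hf hx (hfx ▸ hle))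

theorem exists_sub_smul_mem_interior {K : Set E} (hK : Convex ℝ K) (hKi : (interior K).Nonempty)
    {q v : E} (hq : q ∈ K)
    (hv : ∀ f : StrongDual ℝ E, f ≠ 0 → (∀ x ∈ K, f x ≤ f q) → 0 < f v) :
    ∃ ε : ℝ, 0 < ε ∧ q - ε • v ∈ interior K := by
  by_contra! hray
  have hconv : Convex ℝ ((AffineMap.lineMap q (q - v) : ℝ →ᵃ[ℝ] E) '' Ioi 0) :=
    (convex_Ioi 0).affine_image _
  obtain ⟨f, u, hf, hfK, hfray⟩ := geometric_hahn_banach_of_nonempty_interior hK hconv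
    (disjoint_left.2 <| by
      rintro _ hx ⟨ε, hε, rfl⟩
      refine hray ε hε ?_
      convert hx using 1
      rw [AffineMap.lineMap_apply_module]
      module) hKi (nonempty_Ioi.image _)
  have hu : ∀ ε : ℝ, 0 < ε → u ≤ f q - ε * f v := fun ε hε ↦ by
    refine (hfray _ (mem_image_of_mem _ hε)).trans_eq ?_
    simp only [AffineMap.lineMap_apply_module, map_add, map_smul, map_sub, smul_eq_mul]
    ring
  have hsupp : ∀ x ∈ K, f x ≤ f q := by
    refine fun x hx ↦ le_of_forall_pos_le_add fun δ hδ ↦ ?_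
    have hden : 0 < |f v| + 1 := by positivity
    have hbound : -(δ / (|f v| + 1) * f v) ≤ δ := by
      rw [← mul_neg, div_mul_eq_mul_div, div_le_iff₀ hden]
      nlinarith [neg_le_abs (f v)]
    linarith [hfK x hx, hu _ (div_pos hδ hden)]
  linarith [hfK q hq, hu 1 one_pos, hv f hf hsupp]

theorem exists_forall_sub_smul_mem_interior {K L : Set E} (hK : Convex ℝ K)
    (hKi : (interior K).Nonempty) (hL : IsCompact L) (hLK : L ⊆ K) {v : E}
    (hv : ∀ q ∈ L, ∀ f : StrongDual ℝ E, f ≠ 0 → (∀ x ∈ K, f x ≤ f q) → 0 < f v) :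
    ∃ ε : ℝ, 0 < ε ∧ ∀ q ∈ L, q - ε • v ∈ interior K := by
  have huniform := hL.eventually_forall_of_forall_eventually (x₀ := (0 : ℝ))
    (P := fun ε q ↦ 0 < ε → q ∈ L → q - ε • v ∈ interior K) fun q hq ↦ by
      obtain ⟨δ, hδ, hint⟩ := exists_sub_smul_mem_interior hK hKi (hLK hq) (hv q hq)
      have hnear : ∀ᶠ z : ℝ × E in 𝓝 (0, q), z.2 - δ • v ∈ interior K :=
        (continuous_snd.sub continuous_const).continuousAt.eventually
          (isOpen_interior.mem_nhds hint)
      filter_upwards [hnear, continuous_fst.continuousAt.eventually (gt_mem_nhds hδ)]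
        with z hz hzδ hz0 hzL
      have hmem := hK.add_smul_mem_interior (hLK hzL) (by rwa [sub_eq_add_neg] at hz)
        ⟨div_pos hz0 hδ, (div_le_one hδ).2 (le_of_lt hzδ)⟩
      rwa [smul_neg, smul_smul, div_mul_cancel₀ _ hδ.ne', ← sub_eq_add_neg] at hmem
  obtain ⟨ε, hε, hε0⟩ := ((huniform.filter_mono nhdsWithin_le_nhds).and
    (self_mem_nhdsWithin (s := Ioi (0 : ℝ)))).exists
  exact ⟨ε, hε0, fun q hq ↦ hε q hq hε0 hq⟩

theorem zero_mem_interior_of_subset_smul_neg {K : Set E} (hK : Convex ℝ K)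
    (hKi : (interior K).Nonempty) {s : ℝ} (hs : 0 < s) (hKs : K ⊆ s • -K) :
    (0 : E) ∈ interior K := by
  obtain ⟨z, hz⟩ := hKi
  convert hK.combo_interior_self_mem_interior hz
    (neg_inv_smul_mem hs.ne' hKs (interior_subset hz))
    (a := 1 / (1 + s)) (b := s / (1 + s)) (by positivity) (by positivity) (by field_simp) using 1
  match_scalars
  field_simp
  ring

theorem zero_mem_interior_convexHull_range [FiniteDimensional ℝ E] {ι : Type*} [Fintype ι]
    [Nonempty ι] {p : ι → E} (hp : Submodule.span ℝ (range p) = ⊤) {μ : ι → ℝ}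
    (hμ : ∀ i, 0 < μ i) (hμp : ∑ i, μ i • p i = 0) :
    (0 : E) ∈ interior (convexHull ℝ (range p)) := by
  have h0 : (0 : E) ∈ convexHull ℝ (range p) := by
    have hmem := Finset.centerMass_mem_convexHull Finset.univ (fun i _ ↦ (hμ i).le)
      (Finset.sum_pos (fun i _ ↦ hμ i) Finset.univ_nonempty) fun i _ ↦ mem_range_self (f := p) i
    rwa [Finset.centerMass, hμp, smul_zero] at hmem
  have hint : (interior (convexHull ℝ (range p))).Nonempty := by
    rw [interior_convexHull_nonempty_iff_affineSpan_eq_top,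
      ← affineSpan_insert_eq_affineSpan ℝ (convexHull_subset_affineSpan _ h0)]
    refine AffineSubspace.coe_injective ?_
    rw [affineSpan_insert_zero, hp, Submodule.top_coe, AffineSubspace.top_coe]
  by_contra hout
  obtain ⟨f, hf, hle⟩ := geometric_hahn_banach_of_nonempty_interior_point
    (convex_convexHull ℝ (range p)) hout hint
  have hnonpos : ∀ i, μ i * f (p i) ≤ 0 := fun i ↦ mul_nonpos_of_nonneg_of_nonpos (hμ i).le <| by
    simpa only [map_zero] using hle _ (subset_convexHull ℝ _ (mem_range_self i))
  have hsum : ∑ i, μ i * f (p i) = 0 := by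
    simpa only [map_sum, map_smul, map_zero, smul_eq_mul] using congrArg f hμp
  have hterm : ∀ i, μ i * f (p i) = 0 := fun i ↦
    (Finset.sum_eq_zero_iff_of_nonpos fun i _ ↦ hnonpos i).1 hsum i (Finset.mem_univ i)
  have hzero : ∀ i, f (p i) = 0 := fun i ↦ (mul_eq_zero.1 (hterm i)).resolve_left (hμ i).ne'
  exact hf (ContinuousLinearMap.coe_injective (LinearMap.ext_on_range hp hzero))

theorem exists_ne_zero_apply_eq_zero_of_odd (hE : 1 < Module.rank ℝ E) {f : E → ℝ}
    (hf : Continuous f) (hodd : ∀ x, f (-x) = -f x) : ∃ x, x ≠ 0 ∧ f x = 0 := by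
  have hconn := (isConnected_compl_singleton_of_one_lt_rank hE 0).isPreconnected
  have : Nontrivial E := rank_pos_iff_nontrivial.1 (zero_lt_one.trans hE)
  obtain ⟨v, hv⟩ := exists_ne (0 : E)
  wlog hfv : f v ≤ 0 generalizing v
  · exact this (-v) (neg_ne_zero.2 hv) (by linarith [hodd v])
  exact hconn.intermediate_value hv (neg_ne_zero.2 hv) hf.continuousOn
    ⟨hfv, by linarith [hodd v]⟩

theorem exists_ne_zero_mem_frontier_inter_frontier_neg (hE : 1 < Module.rank ℝ E) {K : Set E}
    (hK : Convex ℝ K) (hKb : Bornology.IsBounded K) (h0 : (0 : E) ∈ interior K) :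
    ∃ p, p ≠ 0 ∧ p ∈ frontier K ∩ frontier (-K) := by
  have hnhds : K ∈ nhds (0 : E) := mem_interior_iff_mem_nhds.1 h0
  have hcont : Continuous (gauge K) := continuous_gauge hK hnhds
  obtain ⟨x, hx, hgauge⟩ := exists_ne_zero_apply_eq_zero_of_odd hE
    (hcont.sub (hcont.comp continuous_neg)) fun x ↦ by simp
  have hpos : 0 < gauge K x := (gauge_pos (absorbent_nhds_zero hnhds)
    ((NormedSpace.isVonNBounded_iff ℝ).2 hKb)).2 hx
  have hgauge' : gauge K (-x) = gauge K x := (sub_eq_zero.1 hgauge).symm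
  refine ⟨(gauge K x)⁻¹ • x, smul_ne_zero (inv_ne_zero hpos.ne') hx,
    (gauge_eq_one_iff_mem_frontier hK hnhds).1 ?_,
    (gauge_eq_one_iff_mem_frontier hK.neg (neg_mem_nhds_zero E hnhds)).1 ?_⟩
  · rw [gauge_smul_of_nonneg (by positivity), smul_eq_mul, inv_mul_cancel₀ hpos.ne']
  · rw [gauge_neg_set_eq_gauge_neg, ← smul_neg, gauge_smul_of_nonneg (by positivity), hgauge',
      smul_eq_mul, inv_mul_cancel₀ hpos.ne']

end ConvexGeometry

/-! ### Touching systems -/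

/-- Certificate that no translate of `-r⁻¹ • K` with `r < s` fits into `K`: points `p i` of
`K ∩ -s⁻¹ • K`, functionals `a i` supporting `K` at `p i` and normalised by `a i (p i) = 1`, and
positive weights showing that `0` is a convex combination of the `a i`. -/
structure TouchingSystem {E ι : Type*} [NormedAddCommGroup E] [NormedSpace ℝ E] [Fintype ι]
    (K : Set E) (s : ℝ) (p : ι → E) (a : ι → StrongDual ℝ E) (w : ι → ℝ) : Prop where
  mem : ∀ i, p i ∈ K
  neg_smul_mem : ∀ i, -s • p i ∈ K
  apply_le_one : ∀ i, ∀ x ∈ K, a i x ≤ 1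
  apply_self : ∀ i, a i (p i) = 1
  weight_pos : ∀ i, 0 < w i
  sum_weight : ∑ i, w i = 1
  sum_smul : ∑ i, w i • a i = 0

/-- The functionals admissible in a `TouchingSystem` for `K` and `s`. -/
def touchingFunctionals {E : Type*} [NormedAddCommGroup E] [NormedSpace ℝ E] (K : Set E) (s : ℝ) :
    Set (StrongDual ℝ E) :=
  {f | (∀ x ∈ K, f x ≤ 1) ∧ ∃ p ∈ K, -s • p ∈ K ∧ f p = 1}

namespace TouchingSystem

section General

variable {E ι : Type*} [NormedAddCommGroup E] [NormedSpace ℝ E] [Fintype ι] {K : Set E} {s : ℝ}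
  {p : ι → E} {a : ι → StrongDual ℝ E} {w : ι → ℝ}

theorem comp {κ : Type*} [Fintype κ] (h : TouchingSystem K s p a w) (e : κ ≃ ι) :
    TouchingSystem K s (p ∘ e) (a ∘ e) (w ∘ e) where
  mem _ := h.mem _
  neg_smul_mem _ := h.neg_smul_mem _
  apply_le_one _ := h.apply_le_one _
  apply_self _ := h.apply_self _
  weight_pos _ := h.weight_pos _
  sum_weight := (e.sum_comp w).trans h.sum_weight
  sum_smul := (e.sum_comp fun i ↦ w i • a i).trans h.sum_smul

theorem sum_weight_mul_apply (h : TouchingSystem K s p a w) (x : E) : ∑ i, w i * a i x = 0 := by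
  simpa using congrArg (fun f : StrongDual ℝ E ↦ f x) h.sum_smul

theorem ne_zero (h : TouchingSystem K s p a w) (i : ι) : a i ≠ 0 := fun hi ↦ by
  simpa [hi] using h.apply_self i

theorem apply_le_apply_self (h : TouchingSystem K s p a w) (i : ι) {x : E} (hx : x ∈ K) :
    a i x ≤ a i (p i) :=
  (h.apply_le_one i x hx).trans_eq (h.apply_self i).symm

theorem neg_one_le_mul_apply (h : TouchingSystem K s p a w) (i j : ι) : -1 ≤ s * a j (p i) := by
  have hle := h.apply_le_one j _ (h.neg_smul_mem i)
  rw [map_smul, smul_eq_mul] at hle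
  linarith

theorem add_one_mul_weight_le_one (h : TouchingSystem K s p a w) (i : ι) : (s + 1) * w i ≤ 1 := by
  have hsum : ∑ j, w j * (1 - a j (-s • p i)) = 1 := by
    simp only [mul_sub, mul_one, Finset.sum_sub_distrib, h.sum_weight, h.sum_weight_mul_apply,
      sub_zero]
  have hterm := Finset.single_le_sum (f := fun j ↦ w j * (1 - a j (-s • p i)))
    (fun j _ ↦ mul_nonneg (h.weight_pos j).le
      (sub_nonneg.2 (h.apply_le_one j _ (h.neg_smul_mem i)))) (Finset.mem_univ i)
  rw [hsum, map_smul, h.apply_self, smul_eq_mul] at hterm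
  linarith

theorem add_one_le_card (h : TouchingSystem K s p a w) : s + 1 ≤ Fintype.card ι := by
  have hle := Finset.sum_le_sum fun i (_ : i ∈ Finset.univ) ↦ h.add_one_mul_weight_le_one i
  simpa only [← Finset.mul_sum, h.sum_weight, mul_one, Finset.sum_const, Finset.card_univ,
    nsmul_eq_mul] using hle

end General

theorem minkAsym_eq {ι : Type*} [Fintype ι] {K : Set E2} {s : ℝ} {p : ι → E2}
    {a : ι → StrongDual ℝ E2} {w : ι → ℝ} (h : TouchingSystem K s p a w) (hs : 0 < s)
    (hK : K ⊆ s • -K) : minkAsym K = s := by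
  have hmem : s ∈ {ρ : ℝ | 0 < ρ ∧ ∃ c : E2, K - {c} ⊆ ρ • ({c} - K)} :=
    ⟨hs, 0, by simpa using hK⟩
  refine le_antisymm (csInf_le ⟨0, fun ρ hρ ↦ hρ.1.le⟩ hmem) (le_csInf ⟨s, hmem⟩ ?_)
  rintro ρ ⟨hρ, c, hsub⟩
  have hbound : ∀ i, (1 + ρ) * a i c ≤ ρ - s := fun i ↦ by
    obtain ⟨_, ⟨_, rfl, y, hy, rfl⟩, hy'⟩ := hsub ⟨_, h.neg_smul_mem i, c, rfl, rfl⟩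
    have happly := congrArg (a i) hy'
    simp only [map_sub, map_smul, h.apply_self, smul_eq_mul] at happly
    linarith [mul_le_mul_of_nonneg_left (h.apply_le_one i y hy) hρ.le]
  have hsum := Finset.sum_le_sum fun i (_ : i ∈ Finset.univ) ↦
    mul_le_mul_of_nonneg_left (hbound i) (h.weight_pos i).le
  rw [← Finset.sum_mul, h.sum_weight, Finset.sum_congr rfl fun i _ ↦ mul_left_comm _ _ _,
    ← Finset.mul_sum, h.sum_weight_mul_apply] at hsum
  linarith

end TouchingSystem

theorem isCompact_touchingFunctionals {E : Type*} [NormedAddCommGroup E] [NormedSpace ℝ E]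
    [FiniteDimensional ℝ E] {K : Set E} (hK : IsCompact K) (h0 : (0 : E) ∈ interior K) (s : ℝ) :
    IsCompact (touchingFunctionals K s) := by
  have hpolar : IsCompact {f : StrongDual ℝ E | ∀ x ∈ K, f x ≤ 1} := by
    have : ProperSpace (StrongDual ℝ E) := FiniteDimensional.proper ℝ _
    have hnhds : K ∩ -K ∈ nhds (0 : E) :=
      Filter.inter_mem (mem_interior_iff_mem_nhds.1 h0)
        (neg_mem_nhds_zero E (mem_interior_iff_mem_nhds.1 h0))
    refine Metric.isCompact_of_isClosed_isBounded ?_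
      ((NormedSpace.isBounded_polar_of_mem_nhds_zero ℝ hnhds).subset fun f hf x hx ↦ ?_)
    · simp only [ofPred_forall]
      exact isClosed_biInter fun x _ ↦ isClosed_le (by fun_prop) continuous_const
    · have hneg := hf (-x) hx.2
      rw [map_neg] at hneg
      have habs : |f x| ≤ 1 := abs_le.2 ⟨by linarith, hf x hx.1⟩
      exact habs
  have hclosed : IsClosed {z : StrongDual ℝ E × E | -s • z.2 ∈ K ∧ z.1 z.2 = 1} :=
    (hK.isClosed.preimage (by fun_prop)).inter (isClosed_eq (by fun_prop) continuous_const)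
  convert ((hpolar.prod hK).inter_right hclosed).image continuous_fst using 1
  ext f
  constructor
  · rintro ⟨hf, q, hq, hsq, hfq⟩
    exact ⟨(f, q), ⟨⟨hf, hq⟩, hsq, hfq⟩, rfl⟩
  · rintro ⟨⟨f, q⟩, ⟨⟨hf, hq⟩, hsq, hfq⟩, rfl⟩
    exact ⟨hf, q, hq, hsq, hfq⟩

theorem minkAsym_lt_of_forall_mem_interior {K : Set E2} (hK : IsCompact K) {s : ℝ} (hs : 0 < s)
    {u : E2} (hu : ∀ q ∈ K, -s⁻¹ • q - u ∈ interior K) : minkAsym K < s := by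
  have hnear := hK.eventually_forall_of_forall_eventually (x₀ := s)
    (P := fun ρ q ↦ -ρ⁻¹ • q - u ∈ interior K) fun q hq ↦ by
      have hcont : ContinuousAt (fun z : ℝ × E2 ↦ -z.1⁻¹ • z.2 - u) (s, q) := by
        have hinv : ContinuousAt (fun z : ℝ × E2 ↦ z.1⁻¹) (s, q) :=
          continuous_fst.continuousAt.inv₀ hs.ne'
        fun_prop
      exact hcont.eventually (isOpen_interior.mem_nhds (hu q hq))
  obtain ⟨ρ, ⟨hρK, hρ⟩, hρs⟩ := (((hnear.and (lt_mem_nhds hs)).filter_mono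
    nhdsWithin_le_nhds).and (self_mem_nhdsWithin (s := Iio s))).exists
  suffices hmem : ρ ∈ {ρ : ℝ | 0 < ρ ∧ ∃ c : E2, K - {c} ⊆ ρ • ({c} - K)} from
    (csInf_le ⟨0, fun r hr ↦ hr.1.le⟩ hmem).trans_lt hρs
  refine ⟨hρ, (-(ρ / (1 + ρ))) • u, ?_⟩
  rintro _ ⟨q, hq, c, rfl, rfl⟩
  refine ⟨_, ⟨_, rfl, _, interior_subset (hρK q hq), rfl⟩, ?_⟩
  simp only
  match_scalars <;> field_simp
  ring

theorem zero_mem_convexHull_touchingFunctionals {K : Set E2} (hK : IsConvexBody K)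
    (hc : MinkCentered K) (hs : 0 < minkAsym K) :
    (0 : StrongDual ℝ E2) ∈ convexHull ℝ (touchingFunctionals K (minkAsym K)) := by
  obtain ⟨hconv, hcpt, hne⟩ := hK
  have h0 := zero_mem_interior_of_subset_smul_neg hconv hne hs hc
  by_contra hout
  obtain ⟨Φ, u, hΦ0, hΦ⟩ := geometric_hahn_banach_point_closed (convex_convexHull ℝ _)
    (isCompact_convexHull (isCompact_touchingFunctionals hcpt h0 _)).isClosed hout
  obtain ⟨v, hv⟩ := exists_forall_eq_apply_of_bidual Φ
  have hpos : ∀ f ∈ touchingFunctionals K (minkAsym K), 0 < f v := fun f hf ↦ by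
    linarith [hΦ f (subset_convexHull ℝ _ hf), hv f, map_zero Φ]
  obtain ⟨ε, -, hε⟩ := exists_forall_sub_smul_mem_interior hconv hne
    (hcpt.image (continuous_const_smul (-(minkAsym K)⁻¹)))
    (image_subset_iff.2 fun q hq ↦ neg_inv_smul_mem hs.ne' hc hq) (v := v) (by
      rintro _ ⟨q, hq, rfl⟩ f hf hsupp
      have hfq := apply_lt_of_mem_interior hf hsupp h0
      rw [map_zero] at hfq
      have hmem : (f (-(minkAsym K)⁻¹ • q))⁻¹ • f ∈ touchingFunctionals K (minkAsym K) := by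
        refine ⟨fun x hx ↦ ?_, _, neg_inv_smul_mem hs.ne' hc hq, ?_, inv_mul_cancel₀ hfq.ne'⟩
        · exact (inv_mul_le_one₀ hfq).2 (hsupp x hx)
        · simpa [smul_smul, hs.ne'] using hq
      exact pos_of_mul_pos_right (hpos _ hmem) (inv_nonneg.2 hfq.le))
  exact (minkAsym_lt_of_forall_mem_interior hcpt hs
    fun q hq ↦ hε _ (mem_image_of_mem _ hq)).false

theorem exists_touchingSystem {K : Set E2} (hK : IsConvexBody K) (hc : MinkCentered K)
    (hs : 1 < minkAsym K) : ∃ (p : Fin 3 → E2) (a : Fin 3 → StrongDual ℝ E2) (w : Fin 3 → ℝ),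
      TouchingSystem K (minkAsym K) p a w := by
  obtain ⟨ι, _, a, w, ha, hind, hw, hw1, hwa⟩ := eq_pos_convex_span_of_mem_convexHull
    (zero_mem_convexHull_touchingFunctionals hK hc (zero_lt_one.trans hs))
  choose hle p hp hsp hap using fun i ↦ ha (mem_range_self i)
  have h : TouchingSystem K (minkAsym K) p a w := ⟨hp, hsp, hle, hap, hw, hw1, hwa⟩
  have hupper : Fintype.card ι ≤ 3 := by
    have hdim : Module.finrank ℝ (StrongDual ℝ E2) = 2 := by
      rw [← (LinearMap.toContinuousLinearMap (E := E2) (F' := ℝ)).finrank_eq,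
        Subspace.dual_finrank_eq, finrank_euclideanSpace_fin]
    exact hind.card_le_finrank_succ.trans
      (Nat.succ_le_succ ((Submodule.finrank_le _).trans_eq hdim))
  have hlower : 2 < Fintype.card ι := by
    exact_mod_cast show (2 : ℝ) < Fintype.card ι by linarith [h.add_one_le_card]
  exact ⟨_, _, _, h.comp (Fintype.equivFinOfCardEq (by omega : Fintype.card ι = 3)).symm⟩

/-! ### Admissible parameters -/

section Numerics

variable {s α β : ℝ}

theorem one_lt_of_phiR_lt (hs : phiR < s) : 1 < s := by
  have h5 : (1 : ℝ) < √5 := Real.lt_sqrt_of_sq_lt (by norm_num)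
  rw [phiR] at hs
  linarith

theorem add_one_lt_sq_of_phiR_lt (hs : phiR < s) : s + 1 < s ^ 2 := by
  have h5 : √5 ^ 2 = 5 := Real.sq_sqrt (by norm_num)
  rw [phiR] at hs
  nlinarith [Real.sqrt_nonneg 5]

/-- The parameters `(α, β)` for which `p = β • p² - α • p³` gives rise to a body `K̄` of
asymmetry `s`. The condition `le_mul_add` says that the line through `-p` and `p³` does not
separate `-s • p²` from `0`, and `sq_mul_le` that `-s • p¹` lies between `0` and the intersection
point `d¹` of that line with the line through `p` and `p²`. -/
structure IsAdmissible (s α β : ℝ) : Prop where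
  nonneg : 0 ≤ α
  le : α ≤ β
  le_one : β ≤ 1
  le_mul_add : s ≤ s * α + β
  sq_mul_le : s ^ 2 * (α + β - 1) ≤ (α + β) - (α - β) ^ 2

/-- The factor `r` for which `p = β • p² - α • p³` equals `r / 2` times the vector from `-s • p²` to
the point of the segment `[p, -s • p³]` that makes this vector parallel to `p`. -/
def chordRatio (s α β : ℝ) : ℝ := 2 * β / (s + β - α)

theorem cExpr3_eq (s : ℝ) : cExpr3 s = 2 * (2 * s + 1 - s ^ 2) / ((3 - s) * (s + 1)) := by
  rw [cExpr3, ← neg_div_neg_eq]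
  ring_nf

theorem isAdmissible_vertex (hs : phiR < s) (hs2 : s ≤ 2) :
    IsAdmissible s (s * (s - 1) / (s + 1)) (s * (2 * s + 1 - s ^ 2) / (s + 1)) := by
  have hs1 := one_lt_of_phiR_lt hs
  have hsq := add_one_lt_sq_of_phiR_lt hs
  have hpos : 0 < s + 1 := by linarith
  refine ⟨div_nonneg (by nlinarith) hpos.le, div_le_div_of_nonneg_right (by nlinarith) hpos.le,
    (div_le_one hpos).2 (by nlinarith), le_of_eq ?_, le_of_eq ?_⟩ <;>
  · field_simp
    ring

theorem chordRatio_vertex (hs : 0 < s) :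
    chordRatio s (s * (s - 1) / (s + 1)) (s * (2 * s + 1 - s ^ 2) / (s + 1)) = cExpr3 s := by
  have hden : s + s * (2 * s + 1 - s ^ 2) / (s + 1) - s * (s - 1) / (s + 1) = s * (3 - s) := by
    field_simp
    ring
  rw [chordRatio, cExpr3_eq, hden]
  field_simp

theorem two_div_add_one_le_cExpr3 (hs1 : 1 ≤ s) (hs2 : s ≤ 2) : 2 / (s + 1) ≤ cExpr3 s := by
  have hden : 0 < (3 - s) * (s + 1) := mul_pos (by linarith) (by linarith)
  rw [cExpr3_eq, div_le_div_iff₀ (by linarith) hden]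
  have hprod : 0 ≤ (s - 1) * (2 - s) := mul_nonneg (sub_nonneg.2 hs1) (sub_nonneg.2 hs2)
  nlinarith [mul_nonneg hprod (by linarith : 0 ≤ s + 1)]

theorem isAdmissible_of_le {x y : ℝ} (hs : 1 ≤ s) (hα : 0 ≤ α) (hαβ : α ≤ β) (hβ : β ≤ 1)
    (hle : s ≤ s * α + β) (hxy : s ^ 2 ≤ x + y) (hp : α * x - (1 - β) * y ≤ α)
    (hneg : β * y - (1 - α) * x ≤ β) : IsAdmissible s α β := by
  refine ⟨hα, hαβ, hβ, hle, ?_⟩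
  have hone : 0 ≤ α + β - 1 := by nlinarith
  have hsub : 0 ≤ 1 + β - α := by linarith
  have hsub' : 0 ≤ 1 + α - β := by linarith
  linear_combination (1 + β - α) * hp + (1 + α - β) * hneg + (α + β - 1) * hxy

theorem chordRatio_le_cExpr3 {x y : ℝ} (hs : 1 < s) (hs2 : s ≤ 2) (hα : 0 ≤ α) (hαβ : α ≤ β)
    (hβ : β ≤ 1) (hlt : s * α + β < s) (hle : s ≤ s * β + α) (hxy : s ^ 2 ≤ x + y)
    (hp : α * x - (1 - β) * y ≤ α) (hy : s * y - x ≤ s) : chordRatio s α β ≤ cExpr3 s := by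
  have hcut : s * β + (s ^ 2 - s - 1) * α ≤ s := by
    refine le_of_mul_le_mul_left ?_ (by linarith : 0 < s + 1)
    have hsub : 0 ≤ 1 + α - β := by linarith
    have hcoef : 0 ≤ s * α + β - 1 := by nlinarith
    linear_combination (1 + α - β) * hy + (s + 1) * hp + (s * α + β - 1) * hxy
  have hden : 0 < (3 - s) * (s + 1) := mul_pos (by linarith) (by linarith)
  rw [chordRatio, cExpr3_eq, div_le_div_iff₀ (by linarith) hden]
  have hcoef : 0 ≤ 2 + s - s ^ 2 := by nlinarith
  linear_combination 2 * (s - 1) * hcut + 2 * (2 + s - s ^ 2) * hlt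

theorem isCompact_setOf_isAdmissible (s : ℝ) : IsCompact {z : ℝ × ℝ | IsAdmissible s z.1 z.2} := by
  have hclosed : IsClosed {z : ℝ × ℝ | IsAdmissible s z.1 z.2} := by
    have hinter : {z : ℝ × ℝ | IsAdmissible s z.1 z.2} = {z | 0 ≤ z.1} ∩ {z | z.1 ≤ z.2} ∩
        {z | z.2 ≤ 1} ∩ {z | s ≤ s * z.1 + z.2} ∩
        {z | s ^ 2 * (z.1 + z.2 - 1) ≤ (z.1 + z.2) - (z.1 - z.2) ^ 2} :=
      Set.ext fun z ↦ ⟨fun ⟨h₁, h₂, h₃, h₄, h₅⟩ ↦ ⟨⟨⟨⟨h₁, h₂⟩, h₃⟩, h₄⟩, h₅⟩,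
        fun ⟨⟨⟨⟨h₁, h₂⟩, h₃⟩, h₄⟩, h₅⟩ ↦ ⟨h₁, h₂, h₃, h₄, h₅⟩⟩
    rw [hinter]
    refine ((((IsClosed.inter ?_ ?_).inter ?_).inter ?_).inter ?_) <;>
      exact isClosed_le (by fun_prop) (by fun_prop)
  exact (isCompact_Icc (a := ((0, 0) : ℝ × ℝ)) (b := (1, 1))).of_isClosed_subset hclosed
    fun z h ↦ ⟨⟨h.nonneg, h.nonneg.trans h.le⟩, h.le.trans h.le_one, h.le_one⟩

theorem exists_isAdmissible_forall_chordRatio_le (hs : phiR < s) (hs2 : s ≤ 2) :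
    ∃ α β, IsAdmissible s α β ∧
      ∀ α' β', IsAdmissible s α' β' → chordRatio s α' β' ≤ chordRatio s α β := by
  have hcont : ContinuousOn (fun z : ℝ × ℝ ↦ chordRatio s z.1 z.2)
      {z | IsAdmissible s z.1 z.2} :=
    ContinuousOn.div (by fun_prop) (by fun_prop) fun z (hz : IsAdmissible s z.1 z.2) ↦ by
      linarith [hz.le, one_lt_of_phiR_lt hs]
  obtain ⟨⟨α, β⟩, h, hmax⟩ := (isCompact_setOf_isAdmissible s).exists_isMaxOn
    ⟨(_, _), isAdmissible_vertex hs hs2⟩ hcont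
  exact ⟨α, β, h, fun α' β' h' ↦ hmax (a := (α', β')) h'⟩

end Numerics

/-! ### The upper bound for τ -/

namespace TouchingSystem

section Triple

variable {E : Type*} [NormedAddCommGroup E] [NormedSpace ℝ E] {K : Set E} {s : ℝ} {p : Fin 3 → E}
  {a : Fin 3 → StrongDual ℝ E} {w : Fin 3 → ℝ}

theorem le_two (h : TouchingSystem K s p a w) : s ≤ 2 := by
  have hcard := h.add_one_le_card
  norm_num at hcard
  linarith

theorem apply_neg (h : TouchingSystem K s p a w) (hs : phiR < s) {i j : Fin 3} (hij : i ≠ j) :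
    a j (p i) < 0 := by
  have hs1 := one_lt_of_phiR_lt hs
  obtain ⟨k, hik, hjk, huniv⟩ :
      ∃ k, i ≠ k ∧ j ≠ k ∧ (Finset.univ : Finset (Fin 3)) = {i, j, k} := by
    decide +revert
  have hsum : ∀ f : Fin 3 → ℝ, ∑ l, f l = f i + (f j + f k) := fun f ↦ by
    rw [huniv, Finset.sum_insert (by simp [hij, hik]), Finset.sum_pair hjk]
  have hw := (hsum w).symm.trans h.sum_weight
  have hdep := (hsum fun l ↦ w l * a l (p i)).symm.trans (h.sum_weight_mul_apply (p i))
  simp only [h.apply_self, mul_one] at hdep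
  by_contra! hnonneg
  have hwi : s - 1 ≤ (s + 1) * w i := by
    linear_combination h.add_one_mul_weight_le_one j + h.add_one_mul_weight_le_one k - (s + 1) * hw
  have hwk : s * w i ≤ w k := by
    nlinarith [mul_nonneg (h.weight_pos j).le hnonneg, h.neg_one_le_mul_apply i k, h.weight_pos k]
  nlinarith [h.add_one_mul_weight_le_one k, add_one_lt_sq_of_phiR_lt hs]

theorem neg_one_lt_apply (h : TouchingSystem K s p a w) (hs : 1 < s) (i j : Fin 3) :
    -1 < a j (p i) := by
  nlinarith [h.neg_one_le_mul_apply i j]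

theorem apply_mul_apply_lt_one (h : TouchingSystem K s p a w) (hs : phiR < s) {i j : Fin 3}
    (hij : i ≠ j) : a j (p i) * a i (p j) < 1 := by
  have hs1 := one_lt_of_phiR_lt hs
  nlinarith [h.neg_one_lt_apply hs1 i j, h.neg_one_lt_apply hs1 j i, h.apply_neg hs hij,
    h.apply_neg hs hij.symm]

theorem linearIndependent_pair (h : TouchingSystem K s p a w) (hs : phiR < s) {i j : Fin 3}
    (hij : i ≠ j) : LinearIndependent ℝ ![p i, p j] := by
  rw [LinearIndependent.pair_iff]
  intro u v huv
  have hi := congrArg (a i) huv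
  have hj := congrArg (a j) huv
  simp only [map_add, map_smul, smul_eq_mul, h.apply_self, mul_one, map_zero] at hi hj
  have hdet := sub_ne_zero.2 (h.apply_mul_apply_lt_one hs hij).ne'
  have hv : v = 0 := (mul_eq_zero.1 (by linear_combination hj - a j (p i) * hi :
    v * (1 - a j (p i) * a i (p j)) = 0)).resolve_right hdet
  exact ⟨by simpa [hv] using hi, hv⟩

theorem span_pair_eq_top (h : TouchingSystem K s p a w) (hs : phiR < s)
    (hE : Module.finrank ℝ E = 2) {i j : Fin 3} (hij : i ≠ j) :
    Submodule.span ℝ {p i, p j} = ⊤ := by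
  have : FiniteDimensional ℝ E := .of_finrank_pos (hE ▸ two_pos)
  rw [← Matrix.range_cons_cons_empty (p i) (p j) ![]]
  exact (h.linearIndependent_pair hs hij).span_eq_top_of_card_eq_finrank' (by simp [hE])

theorem span_range_eq_top (h : TouchingSystem K s p a w) (hs : phiR < s)
    (hE : Module.finrank ℝ E = 2) : Submodule.span ℝ (range p) = ⊤ :=
  top_le_iff.1 <| (h.span_pair_eq_top hs hE (i := 1) (j := 2) (by decide)).ge.trans <|
    Submodule.span_mono (by simp [insert_subset_iff])

theorem exists_neg_smul_eq (h : TouchingSystem K s p a w) (hs : phiR < s)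
    (hE : Module.finrank ℝ E = 2) :
    ∃ x y : ℝ, 0 < x ∧ 0 < y ∧ s ^ 2 ≤ x + y ∧ -s • p 0 = x • p 1 + y • p 2 := by
  have h12 : (1 : Fin 3) ≠ 2 := by decide
  obtain ⟨x, y, hxy⟩ := Submodule.mem_span_pair.1
    (h.span_pair_eq_top hs hE h12 ▸ Submodule.mem_top : -s • p 0 ∈ Submodule.span ℝ {p 1, p 2})
  have h0 := congrArg (a 0) hxy
  have h1 := congrArg (a 1) hxy
  have h2 := congrArg (a 2) hxy
  simp only [map_add, map_smul, smul_eq_mul, h.apply_self, mul_one] at h0 h1 h2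
  have hs0 : 0 < s := zero_lt_one.trans (one_lt_of_phiR_lt hs)
  have h01 := mul_pos hs0 (neg_pos.2 (h.apply_neg hs (i := 0) (j := 1) (by decide)))
  have h02 := mul_pos hs0 (neg_pos.2 (h.apply_neg hs (i := 0) (j := 2) (by decide)))
  have h12' := neg_pos.2 (h.apply_neg hs h12)
  have h21' := neg_pos.2 (h.apply_neg hs h12.symm)
  have hdet := sub_pos.2 (h.apply_mul_apply_lt_one hs h12)
  have hx : 0 < x := by
    refine pos_of_mul_pos_left ?_ hdet.le
    linear_combination h01 + h02 * -a 1 (p 2) - h1 + a 1 (p 2) * h2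
  have hy : 0 < y := by
    refine pos_of_mul_pos_left ?_ hdet.le
    linear_combination h02 + h01 * -a 2 (p 1) - h2 + a 2 (p 1) * h1
  refine ⟨x, y, hx, hy, ?_, hxy.symm⟩
  have hx0 := mul_le_mul_of_nonneg_left (h.neg_one_le_mul_apply 1 0) hx.le
  have hy0 := mul_le_mul_of_nonneg_left (h.neg_one_le_mul_apply 2 0) hy.le
  linear_combination hx0 + hy0 + s * h0

theorem exists_sum_smul_eq_zero (h : TouchingSystem K s p a w) (hs : phiR < s)
    (hE : Module.finrank ℝ E = 2) : ∃ μ : Fin 3 → ℝ, (∀ i, 0 < μ i) ∧ ∑ i, μ i • p i = 0 := by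
  obtain ⟨x, y, hx, hy, -, hxy⟩ := h.exists_neg_smul_eq hs hE
  refine ⟨![s, x, y], ?_, ?_⟩
  · simp [Fin.forall_fin_succ, hx, hy, zero_lt_one.trans (one_lt_of_phiR_lt hs)]
  · simp [Fin.sum_univ_three, add_assoc, ← hxy]

end Triple

section UpperBound

variable {E : Type*} [NormedAddCommGroup E] [NormedSpace ℝ E] {K : Set E} {s : ℝ} {p : Fin 3 → E}
  {a : Fin 3 → StrongDual ℝ E} {w : Fin 3 → ℝ} {α β M : ℝ}

theorem chordRatio_le (h : TouchingSystem K s p a w) (hs : phiR < s)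
    (hE : Module.finrank ℝ E = 2) (hM : ∀ α β, IsAdmissible s α β → chordRatio s α β ≤ M)
    (hα : 0 ≤ α) (hαβ : α ≤ β) (hle : s ≤ s * β + α) (hmem : β • p 1 - α • p 2 ∈ K)
    (hneg : -(β • p 1 - α • p 2) ∈ K) : chordRatio s α β ≤ M := by
  have hs1 := one_lt_of_phiR_lt hs
  have hβ := hα.trans hαβ
  obtain ⟨x, y, hx, hy, hxy, hp0⟩ := h.exists_neg_smul_eq hs hE
  have h21 := h.apply_neg hs (i := 2) (j := 1) (by decide)
  have hle1 := h.apply_le_one 1 _ hmem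
  have hle2 := h.apply_le_one 2 _ hneg
  have hx1 := h.apply_le_one 1 _ (h.neg_smul_mem 0)
  have hx2 := h.apply_le_one 2 _ (h.neg_smul_mem 0)
  have hsub := h.neg_one_le_mul_apply 1 2
  rw [hp0] at hx1 hx2
  simp only [map_add, map_sub, map_neg, map_smul, smul_eq_mul, h.apply_self, mul_one]
    at hle1 hle2 hx1 hx2
  have hβ1 : β ≤ 1 := by nlinarith
  -- In the coordinates `x, y` of `-s • p 0`, these say on which side of the lines through `p 1, q`,
  -- through `p 2, -q` and through `p 2, -s • p 1` that point lies, where `q = β • p 1 - α • p 2`.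
  have hside1 : α * x - (1 - β) * y ≤ α := by linear_combination α * hx1 + y * hle1
  have hside2 : β * y - (1 - α) * x ≤ β := by linear_combination β * hx2 + x * hle2
  have hside3 : s * y - x ≤ s := by nlinarith [mul_le_mul_of_nonneg_left hsub hx.le]
  rcases le_or_gt s (s * α + β) with hαs | hαs
  · exact hM α β (isAdmissible_of_le hs1.le hα hαβ hβ1 hαs hxy hside1 hside2)
  · calc chordRatio s α β ≤ cExpr3 s :=
          chordRatio_le_cExpr3 hs1 h.le_two hα hαβ hβ1 hαs hle hxy hside1 hside3
      _ ≤ M := chordRatio_vertex (zero_lt_one.trans hs1) ▸ hM _ _ (isAdmissible_vertex hs h.le_two)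

theorem smul_sub_smul_mem_smul (h : TouchingSystem K s p a w) (hs : phiR < s)
    (hE : Module.finrank ℝ E = 2) (hK : Convex ℝ K) (h0 : (0 : E) ∈ K)
    (hM : ∀ α β, IsAdmissible s α β → chordRatio s α β ≤ M) (hα : 0 ≤ α) (hαβ : α ≤ β)
    (hmem : β • p 1 - α • p 2 ∈ K) (hneg : -(β • p 1 - α • p 2) ∈ K) :
    β • p 1 - α • p 2 ∈ M • ((2 : ℝ)⁻¹ • (K - K)) := by
  have hs1 := one_lt_of_phiR_lt hs
  have hs0 : 0 < s := by linarith
  have hβα := sub_nonneg.2 hαβ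
  have hMs : 2 / (s + 1) ≤ M := (two_div_add_one_le_cExpr3 hs1.le h.le_two).trans
    (chordRatio_vertex hs0 ▸ hM _ _ (isAdmissible_vertex hs h.le_two))
  have hM0 : 0 < M := lt_of_lt_of_le (by positivity) hMs
  rcases le_or_gt s (s * β + α) with hle | hlt
  · have hβ : 0 < β := by nlinarith
    have hden : 0 < s + β - α := by linarith
    convert div_two_smul_sub_mem hK h0
      (hK hmem (h.neg_smul_mem 2) (a := (β - α) / β) (b := α / β) (by positivity) (by positivity)
        (by field_simp; ring)) (h.neg_smul_mem 1) (div_nonneg (by positivity) hden.le) hM0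
      (h.chordRatio_le hs hE hM hα hαβ hle hmem hneg) using 1
    match_scalars <;> (field_simp; ring)
  · have hsum : β - α + α * (s + 1) / s ≤ 1 :=
      calc β - α + α * (s + 1) / s = (s * β + α) / s := by
            field_simp
            ring
        _ ≤ 1 := (div_le_one hs0).2 hlt.le
    convert div_two_smul_sub_mem hK h0
      (smul_add_smul_mem_of_add_le_one hK h0 (h.mem 1) (h.neg_smul_mem 2) hβα
        (by positivity : 0 ≤ α * (s + 1) / s) hsum)
      (hK.smul_mem_of_zero_mem h0 (h.neg_smul_mem 1)
        ⟨by positivity, hsum⟩) (by positivity) hM0 hMs using 1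
    match_scalars <;> field_simp
    ring

theorem inter_neg_subset_smul (h : TouchingSystem K s p a w) (hs : phiR < s)
    (hE : Module.finrank ℝ E = 2) (hK : Convex ℝ K) (h0 : (0 : E) ∈ K)
    (hM : ∀ α β, IsAdmissible s α β → chordRatio s α β ≤ M) :
    K ∩ -K ⊆ M • ((2 : ℝ)⁻¹ • (K - K)) := by
  rintro q ⟨hq, hnq⟩
  obtain ⟨μ, hμ, hμp⟩ := h.exists_sum_smul_eq_zero hs hE
  obtain ⟨σ, α, β, hα, hβ, rfl⟩ :=
    exists_perm_eq_smul_sub_smul (h.span_range_eq_top hs hE) hμ hμp q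
  rcases le_total α β with hαβ | hβα
  · exact (h.comp ((finRotate 3).trans σ)).smul_sub_smul_mem_smul hs hE hK h0 hM hα hαβ hq hnq
  · have hsymm : -(M • ((2 : ℝ)⁻¹ • (K - K))) = M • ((2 : ℝ)⁻¹ • (K - K)) := by
      rw [← smul_set_neg, ← smul_set_neg, neg_sub]
    rw [mem_neg, neg_sub] at hnq
    rw [← neg_sub] at hq
    rw [← hsymm, mem_neg, neg_sub]
    exact (h.comp ((Equiv.swap 0 1).trans σ)).smul_sub_smul_mem_smul hs hE hK h0 hM hβ hβα hnq hq

end UpperBound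

theorem isAsymPoint {ι : Type*} [Fintype ι] {K : Set E2} {s : ℝ} {p : ι → E2}
    {a : ι → StrongDual ℝ E2} {w : ι → ℝ} (h : TouchingSystem K s p a w) (hs : 0 < s)
    (hK : K ⊆ s • -K) (i : ι) : IsAsymPoint K (p i) := by
  rw [IsAsymPoint, h.minkAsym_eq hs hK]
  refine ⟨mem_frontier_of_forall_apply_le (h.ne_zero i) (h.mem i) fun y hy ↦
      h.apply_le_apply_self i hy, mem_frontier_of_forall_apply_le (h.ne_zero i)
      ⟨_, h.neg_smul_mem i, ?_⟩ ?_⟩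
  · simp [smul_smul, hs.ne']
  · rintro _ ⟨y, hy, rfl⟩
    exact h.apply_le_apply_self i (neg_inv_smul_mem hs.ne' hK hy)

theorem wellSpread {K : Set E2} {s : ℝ} {p : Fin 3 → E2} {a : Fin 3 → StrongDual ℝ E2}
    {w : Fin 3 → ℝ} (h : TouchingSystem K s p a w) (hs : phiR < s) (hK : K ⊆ s • -K) :
    WellSpread K (p 0) (p 1) (p 2) := by
  have hs0 : 0 < s := zero_lt_one.trans (one_lt_of_phiR_lt hs)
  have hE : Module.finrank ℝ E2 = 2 := finrank_euclideanSpace_fin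
  have hrange : ∀ f : Fin 3 → E2, {f 0, f 1, f 2} = range f := fun f ↦ by
    ext
    simp [Fin.exists_fin_succ, eq_comm]
  let toE2 := (InnerProductSpace.toDual ℝ E2).symm
  have hinner : ∀ f x, inner ℝ (toE2 f) x = f x := fun f x ↦
    InnerProductSpace.toDual_symm_apply
  have hsupp : ∀ i, ∀ x ∈ K, inner ℝ (toE2 (a i)) x ≤ inner ℝ (toE2 (a i)) (p i) := fun i x hx ↦ by
    simpa only [hinner] using h.apply_le_apply_self i hx
  have hne : ∀ i, toE2 (a i) ≠ 0 := fun i ↦ toE2.map_ne_zero_iff.2 (h.ne_zero i)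
  obtain ⟨μ, hμ, hμp⟩ := h.exists_sum_smul_eq_zero hs hE
  refine ⟨h.isAsymPoint hs0 hK 0, h.isAsymPoint hs0 hK 1, h.isAsymPoint hs0 hK 2, _, _, _, hne 0,
    hne 1, hne 2, hsupp 0, hsupp 1, hsupp 2, ?_, ?_⟩
  · rw [hrange p]
    exact zero_mem_interior_convexHull_range (h.span_range_eq_top hs hE) hμ hμp
  · rw [hrange fun i ↦ toE2 (a i)]
    refine mem_convexHull_of_exists_fintype w (fun i ↦ toE2 (a i)) (fun i ↦ (h.weight_pos i).le)
      h.sum_weight mem_range_self ?_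
    simpa using congrArg toE2 h.sum_smul

end TouchingSystem

/-! ### The extremal body -/

section ApexCoord

variable {s α β : ℝ}

/-- The first coordinate of `-s • p¹` in the basis `(p², p³)`; the second one is
`apexCoord s β α`. They are chosen so that `-s • p¹` is a multiple of `d¹` and their sum is
`s ^ 2`, which makes `p¹` a point of the segment `[-s • p², -s • p³]`. -/
def apexCoord (s α β : ℝ) : ℝ := s ^ 2 * (β * (1 + α - β)) / ((α + β) - (α - β) ^ 2)

theorem apexCoord_add_apexCoord (s : ℝ) (hW : (α + β) - (α - β) ^ 2 ≠ 0) :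
    apexCoord s α β + apexCoord s β α = s ^ 2 := by
  rw [apexCoord, apexCoord, add_comm β α, sub_sq_comm β α, ← add_div, div_eq_iff hW]
  ring

theorem mul_apexCoord_sub_mul_le (hα : 0 ≤ α) (hW : 0 < (α + β) - (α - β) ^ 2)
    (hle : s ^ 2 * (α + β - 1) ≤ (α + β) - (α - β) ^ 2) :
    α * apexCoord s α β - (1 - β) * apexCoord s β α ≤ α :=
  calc α * apexCoord s α β - (1 - β) * apexCoord s β α
      = α * (s ^ 2 * (α + β - 1) / ((α + β) - (α - β) ^ 2)) := by
        rw [apexCoord, apexCoord, add_comm β α, sub_sq_comm β α]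
        ring
    _ ≤ α * 1 := mul_le_mul_of_nonneg_left ((div_le_one hW).2 hle) hα
    _ = α := mul_one α

namespace IsAdmissible

theorem pos_left (h : IsAdmissible s α β) (hs : 1 < s) : 0 < α := by
  nlinarith [h.le_one, h.le_mul_add]

theorem pos_right (h : IsAdmissible s α β) (hs : 1 < s) : 0 < β :=
  (h.pos_left hs).trans_le h.le

theorem one_lt_add (h : IsAdmissible s α β) (hs : 1 < s) : 1 < α + β := by
  nlinarith [h.le, h.le_one, h.le_mul_add]

theorem add_le (h : IsAdmissible s α β) (hs : phiR < s) : α + β ≤ s := by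
  nlinarith [h.sq_mul_le, sq_nonneg (α - β), one_lt_of_phiR_lt hs, add_one_lt_sq_of_phiR_lt hs]

theorem le_add_mul (h : IsAdmissible s α β) (hs : 1 ≤ s) : s ≤ α + s * β := by
  nlinarith [h.le, h.le_mul_add]

theorem add_sub_sq_pos (h : IsAdmissible s α β) (hs : 1 < s) : 0 < (α + β) - (α - β) ^ 2 := by
  have hone := sub_pos.2 (h.one_lt_add hs)
  have hpos : 0 < s ^ 2 * (α + β - 1) := by positivity
  exact hpos.trans_le h.sq_mul_le

theorem apexCoord_pos (h : IsAdmissible s α β) (hs : 1 < s) : 0 < apexCoord s α β := by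
  have hfac : 0 < 1 + α - β := by linarith [h.pos_left hs, h.le_one]
  have hβ := h.pos_right hs
  exact div_pos (by positivity) (h.add_sub_sq_pos hs)

theorem apexCoord_swap_pos (h : IsAdmissible s α β) (hs : 1 < s) : 0 < apexCoord s β α := by
  have hfac : 0 < 1 + β - α := by linarith [h.le]
  have hα := h.pos_left hs
  rw [apexCoord, add_comm β α, sub_sq_comm]
  exact div_pos (by positivity) (h.add_sub_sq_pos hs)

theorem mul_apexCoord_sub_le (h : IsAdmissible s α β) (hs : 1 < s) :
    α * apexCoord s α β - (1 - β) * apexCoord s β α ≤ α :=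
  mul_apexCoord_sub_mul_le h.nonneg (h.add_sub_sq_pos hs) h.sq_mul_le

theorem mul_apexCoord_swap_sub_le (h : IsAdmissible s α β) (hs : 1 < s) :
    β * apexCoord s β α - (1 - α) * apexCoord s α β ≤ β := by
  have hW := h.add_sub_sq_pos hs
  have hle := h.sq_mul_le
  rw [add_comm α β, sub_sq_comm α β] at hW hle
  exact mul_apexCoord_sub_mul_le (h.pos_right hs).le hW hle

theorem apexCoord_le (h : IsAdmissible s α β) (hs : 1 < s) (hs2 : s ≤ 2) : apexCoord s α β ≤ s := by
  have hfac : 0 ≤ β * (1 + α - β) :=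
    mul_nonneg (h.pos_right hs).le (by linarith [h.pos_left hs, h.le_one])
  have hle : s * (β * (1 + α - β)) ≤ (α + β) - (α - β) ^ 2 :=
    calc s * (β * (1 + α - β)) ≤ 2 * (β * (1 + α - β)) := mul_le_mul_of_nonneg_right hs2 hfac
      _ ≤ (α + β) - (α - β) ^ 2 := by
        nlinarith [mul_nonneg (sub_nonneg.2 h.le) (sub_nonneg.2 (h.one_lt_add hs).le)]
  rw [apexCoord, div_le_iff₀ (h.add_sub_sq_pos hs)]
  nlinarith

end IsAdmissible

end ApexCoord

section ExtremalBody

variable {E : Type*} [NormedAddCommGroup E] [NormedSpace ℝ E]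

/-- The point `p¹` of the extremal body, where `b = (p², p³)`. -/
def apex (b : Module.Basis (Fin 2) ℝ E) (s α β : ℝ) : E :=
  -s⁻¹ • (apexCoord s α β • b 0 + apexCoord s β α • b 1)

/-- The point `d¹` where the lines through `-p, p³` and through `p, p²` meet, for `b = (p², p³)`
and `p = β • p² - α • p³`. -/
def lineMeet (b : Module.Basis (Fin 2) ℝ E) (α β : ℝ) : E :=
  (β * (1 + α - β) / (α + β - 1)) • b 0 + (α * (1 + β - α) / (α + β - 1)) • b 1

/-- The body `K̄`, with `b = (p², p³)` and `p = β • p² - α • p³`. -/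
def extremalBody (b : Module.Basis (Fin 2) ℝ E) (s α β : ℝ) : Set E :=
  convexHull ℝ {β • b 0 - α • b 1, -(β • b 0 - α • b 1), b 0, b 1, -s • apex b s α β,
    -s • b 0, -s • b 1}

variable {b : Module.Basis (Fin 2) ℝ E} {s α β A B c : ℝ}

theorem neg_smul_apex (hs : s ≠ 0) :
    -s • apex b s α β = apexCoord s α β • b 0 + apexCoord s β α • b 1 := by
  rw [apex, smul_smul, neg_mul_neg, mul_inv_cancel₀ hs, one_smul]

theorem constrL_smul_add_smul (b : Module.Basis (Fin 2) ℝ E) (A B x y : ℝ) :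
    b.constrL ![A, B] (x • b 0 + y • b 1) = A * x + B * y := by
  simp [mul_comm]

theorem constrL_smul_sub_smul (b : Module.Basis (Fin 2) ℝ E) (A B x y : ℝ) :
    b.constrL ![A, B] (x • b 0 - y • b 1) = A * x - B * y := by
  simp [mul_comm, sub_eq_add_neg]

theorem constrL_ne_zero_of_left_ne_zero (b : Module.Basis (Fin 2) ℝ E) (hA : A ≠ 0) :
    b.constrL ![A, B] ≠ 0 := fun h ↦ hA <| by
  simpa using congrArg (fun f : StrongDual ℝ E ↦ f (b 0)) h

theorem constrL_apply_le_of_mem_extremalBody (hs : s ≠ 0) (hp : |A * β - B * α| ≤ c)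
    (hA : A ≤ c) (hB : B ≤ c) (hapex : A * apexCoord s α β + B * apexCoord s β α ≤ c)
    (hsA : -s * A ≤ c) (hsB : -s * B ≤ c) {x : E} (hx : x ∈ extremalBody b s α β) :
    b.constrL ![A, B] x ≤ c := by
  refine apply_le_of_mem_convexHull _ ?_ hx
  rw [neg_smul_apex hs]
  rintro _ (rfl | rfl | rfl | rfl | rfl | rfl | rfl)
  · exact (constrL_smul_sub_smul b A B β α).trans_le ((le_abs_self _).trans hp)
  · rw [map_neg, constrL_smul_sub_smul]
    exact (neg_le_abs _).trans hp
  · simpa using hA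
  · simpa using hB
  · exact (constrL_smul_add_smul b A B _ _).trans_le hapex
  · simpa using hsA
  · simpa using hsB

theorem smul_sub_smul_mem_extremalBody : β • b 0 - α • b 1 ∈ extremalBody b s α β :=
  subset_convexHull ℝ _ (by simp)

theorem neg_smul_sub_smul_mem_extremalBody : -(β • b 0 - α • b 1) ∈ extremalBody b s α β :=
  subset_convexHull ℝ _ (by simp)

theorem basis_mem_extremalBody (i : Fin 2) : b i ∈ extremalBody b s α β :=
  subset_convexHull ℝ _ (by fin_cases i <;> simp)

theorem neg_smul_basis_mem_extremalBody (i : Fin 2) : -s • b i ∈ extremalBody b s α β :=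
  subset_convexHull ℝ _ (by fin_cases i <;> simp)

theorem neg_smul_apex_mem_extremalBody : -s • apex b s α β ∈ extremalBody b s α β :=
  subset_convexHull ℝ _ (by simp)

theorem convex_extremalBody : Convex ℝ (extremalBody b s α β) := convex_convexHull ℝ _

theorem zero_mem_extremalBody : (0 : E) ∈ extremalBody b s α β := by
  simpa only [midpoint_self_neg] using convex_extremalBody.midpoint_mem
    (smul_sub_smul_mem_extremalBody (b := b) (s := s) (α := α) (β := β))
    neg_smul_sub_smul_mem_extremalBody

theorem IsAdmissible.apex_mem_extremalBody (h : IsAdmissible s α β) (hs : 1 < s) :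
    apex b s α β ∈ extremalBody b s α β := by
  have hx := h.apexCoord_pos hs
  have hy := h.apexCoord_swap_pos hs
  have hsum : apexCoord s α β / s ^ 2 + apexCoord s β α / s ^ 2 = 1 := by
    rw [← add_div, apexCoord_add_apexCoord s (h.add_sub_sq_pos hs).ne', div_self (by positivity)]
  convert convex_extremalBody (neg_smul_basis_mem_extremalBody 0)
    (neg_smul_basis_mem_extremalBody 1) (by positivity) (by positivity) hsum using 1
  rw [apex]
  match_scalars <;> field_simp

theorem IsAdmissible.extremalBody_subset_smul_neg (h : IsAdmissible s α β) (hs : 1 < s) :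
    extremalBody b s α β ⊆ s • -extremalBody b s α β := by
  have hs0 : 0 < s := by linarith
  have hinv : s⁻¹ ∈ Icc (0 : ℝ) 1 := ⟨by positivity, inv_le_one_of_one_le₀ hs.le⟩
  have hshrink : ∀ x ∈ extremalBody b s α β, s⁻¹ • x ∈ extremalBody b s α β := fun x hx ↦
    convex_extremalBody.smul_mem_of_zero_mem zero_mem_extremalBody hx hinv
  have hshrink_basis : ∀ i, -s⁻¹ • b i ∈ extremalBody b s α β := fun i ↦ by
    convert hshrink _ (hshrink _ (neg_smul_basis_mem_extremalBody i)) using 1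
    match_scalars
    field_simp
  refine convexHull_min ?_ (convex_extremalBody.neg.smul s)
  suffices hneg : ∀ x ∈ ({β • b 0 - α • b 1, -(β • b 0 - α • b 1), b 0, b 1, -s • apex b s α β,
      -s • b 0, -s • b 1} : Set E), -s⁻¹ • x ∈ extremalBody b s α β from fun x hx ↦ by
    rw [mem_smul_set_iff_inv_smul_mem₀ hs0.ne', mem_neg, ← neg_smul]
    exact hneg x hx
  rintro _ (rfl | rfl | rfl | rfl | rfl | rfl | rfl)
  · rw [neg_smul, ← smul_neg]
    exact hshrink _ neg_smul_sub_smul_mem_extremalBody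
  · rw [neg_smul, smul_neg, neg_neg]
    exact hshrink _ smul_sub_smul_mem_extremalBody
  · exact hshrink_basis 0
  · exact hshrink_basis 1
  · simpa [smul_smul, hs0.ne'] using h.apex_mem_extremalBody hs
  · simpa [smul_smul, hs0.ne'] using basis_mem_extremalBody 0
  · simpa [smul_smul, hs0.ne'] using basis_mem_extremalBody 1

/-- Functionals supporting `extremalBody b s α β` at `apex b s α β`, `b 0` and `b 1`. -/
def extremalFunctionals (b : Module.Basis (Fin 2) ℝ E) (s α β : ℝ) : Fin 3 → StrongDual ℝ E :=
  ![b.constrL ![-s⁻¹, -s⁻¹], b.constrL ![1, -((1 - β) / α)], b.constrL ![-((1 - α) / β), 1]]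

/-- Weights for which `extremalFunctionals` sum to zero. -/
def extremalWeights (s α β : ℝ) : Fin 3 → ℝ :=
  (s * (α + β - 1) + α * (1 + β - α) + β * (1 + α - β))⁻¹ •
    ![s * (α + β - 1), α * (1 + β - α), β * (1 + α - β)]

theorem IsAdmissible.extremalFunctionals_zero_le_one (h : IsAdmissible s α β) (hs : 1 < s)
    {x : E} (hx : x ∈ extremalBody b s α β) : extremalFunctionals b s α β 0 x ≤ 1 := by
  have hs0 : 0 < s := by linarith
  have hcancel := mul_inv_cancel₀ hs0.ne'
  have hsum := apexCoord_add_apexCoord s (h.add_sub_sq_pos hs).ne'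
  have hαβ := h.le
  have hβ := h.le_one
  have hα := h.pos_left hs
  refine constrL_apply_le_of_mem_extremalBody hs0.ne' (abs_le.2 ⟨?_, ?_⟩) ?_ ?_ ?_ ?_ ?_ hx <;>
    nlinarith

theorem IsAdmissible.extremalFunctionals_one_le_one (h : IsAdmissible s α β) (hs : 1 < s)
    {x : E} (hx : x ∈ extremalBody b s α β) : extremalFunctionals b s α β 1 x ≤ 1 := by
  have hα := h.pos_left hs
  have hquot : 0 ≤ (1 - β) / α := div_nonneg (sub_nonneg.2 h.le_one) hα.le
  have hp : (1 : ℝ) * β - -((1 - β) / α) * α = 1 := by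
    field_simp
    ring
  refine constrL_apply_le_of_mem_extremalBody (by linarith) (by rw [hp, abs_one]) le_rfl
    (by linarith) ?_ (by linarith) ?_ hx
  · rw [one_mul, neg_mul, ← sub_eq_add_neg]
    calc apexCoord s α β - (1 - β) / α * apexCoord s β α
        = (α * apexCoord s α β - (1 - β) * apexCoord s β α) / α := by field_simp
      _ ≤ 1 := (div_le_one hα).2 (h.mul_apexCoord_sub_le hs)
  · rw [neg_mul_neg, mul_div_assoc', div_le_one hα]
    linarith [h.le_add_mul hs.le]

theorem IsAdmissible.extremalFunctionals_two_le_one (h : IsAdmissible s α β) (hs : 1 < s)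
    {x : E} (hx : x ∈ extremalBody b s α β) : extremalFunctionals b s α β 2 x ≤ 1 := by
  have hβ := h.pos_right hs
  have hquot : 0 ≤ (1 - α) / β := div_nonneg (by linarith [h.le, h.le_one]) hβ.le
  have hp : -((1 - α) / β) * β - 1 * α = -1 := by
    field_simp
    ring
  refine constrL_apply_le_of_mem_extremalBody (by linarith) (by rw [hp, abs_neg, abs_one])
    (by linarith) le_rfl ?_ ?_ (by linarith) hx
  · rw [one_mul, neg_mul, neg_add_eq_sub]
    calc apexCoord s β α - (1 - α) / β * apexCoord s α β
        = (β * apexCoord s β α - (1 - α) * apexCoord s α β) / β := by field_simp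
      _ ≤ 1 := (div_le_one hβ).2 (h.mul_apexCoord_swap_sub_le hs)
  · rw [neg_mul_neg, mul_div_assoc', div_le_one hβ]
    linarith [h.le_mul_add]

theorem extremalFunctionals_zero_apex (hs : s ≠ 0) (hW : (α + β) - (α - β) ^ 2 ≠ 0) :
    extremalFunctionals b s α β 0 (apex b s α β) = 1 :=
  calc extremalFunctionals b s α β 0 (apex b s α β)
      = -s⁻¹ * (-s⁻¹ * apexCoord s α β + -s⁻¹ * apexCoord s β α) := by
        rw [apex, map_smul, smul_eq_mul]
        exact congrArg _ (constrL_smul_add_smul b _ _ _ _)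
    _ = s⁻¹ ^ 2 * (apexCoord s α β + apexCoord s β α) := by ring
    _ = 1 := by rw [apexCoord_add_apexCoord s hW, ← mul_pow, inv_mul_cancel₀ hs, one_pow]

theorem sum_extremalWeights_smul (b : Module.Basis (Fin 2) ℝ E) (hs : s ≠ 0) (hα : α ≠ 0)
    (hβ : β ≠ 0) : ∑ i, extremalWeights s α β i • extremalFunctionals b s α β i = 0 := by
  suffices hcoord : ∀ j, ∑ i, extremalWeights s α β i * extremalFunctionals b s α β i (b j) = 0 from
    ContinuousLinearMap.coe_injective (b.ext fun j ↦ by simpa using hcoord j)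
  intro j
  fin_cases j <;>
  · simp only [extremalWeights, extremalFunctionals, Fin.sum_univ_three, Pi.smul_apply, smul_eq_mul,
      Matrix.cons_val, Module.Basis.constrL_basis, Fin.zero_eta, Fin.mk_one]
    field_simp
    ring

theorem IsAdmissible.extremalWeights_pos (h : IsAdmissible s α β) (hs : 1 < s) (i : Fin 3) :
    0 < extremalWeights s α β i := by
  have hα := h.pos_left hs
  have hβ := h.pos_right hs
  have hαβ := sub_pos.2 (h.one_lt_add hs)
  have hα' : 0 < 1 + β - α := by linarith [h.le]
  have hβ' : 0 < 1 + α - β := by linarith [h.le_one]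
  refine mul_pos (by positivity) ?_
  fin_cases i
  exacts [mul_pos (zero_lt_one.trans hs) hαβ, mul_pos hα hα', mul_pos hβ hβ']

theorem sum_extremalWeights (h : s * (α + β - 1) + α * (1 + β - α) + β * (1 + α - β) ≠ 0) :
    ∑ i, extremalWeights s α β i = 1 := by
  simp only [extremalWeights, Pi.smul_apply, ← Finset.smul_sum, Fin.sum_univ_three]
  exact inv_mul_cancel₀ h

theorem IsAdmissible.touchingSystem_extremalBody (h : IsAdmissible s α β) (hs : 1 < s) :
    TouchingSystem (extremalBody b s α β) s ![apex b s α β, b 0, b 1]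
      (extremalFunctionals b s α β) (extremalWeights s α β) := by
  have hs0 : s ≠ 0 := by linarith
  have hpos := h.extremalWeights_pos hs
  refine ⟨fun i ↦ ?_, fun i ↦ ?_, fun i x hx ↦ ?_, fun i ↦ ?_, hpos,
    sum_extremalWeights fun h0 ↦ (hpos 0).ne' ?_,
    sum_extremalWeights_smul b hs0 (h.pos_left hs).ne' (h.pos_right hs).ne'⟩
  · fin_cases i
    exacts [h.apex_mem_extremalBody hs, basis_mem_extremalBody 0, basis_mem_extremalBody 1]
  · fin_cases i
    exacts [neg_smul_apex_mem_extremalBody, neg_smul_basis_mem_extremalBody 0,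
      neg_smul_basis_mem_extremalBody 1]
  · fin_cases i
    exacts [h.extremalFunctionals_zero_le_one hs hx, h.extremalFunctionals_one_le_one hs hx,
      h.extremalFunctionals_two_le_one hs hx]
  · fin_cases i
    · exact extremalFunctionals_zero_apex hs0 (h.add_sub_sq_pos hs).ne'
    · simp [extremalFunctionals]
    · simp [extremalFunctionals]
  · rw [extremalWeights, h0, inv_zero, zero_smul, Pi.zero_apply]

theorem IsAdmissible.mem_frontier_extremalBody_inter_neg (h : IsAdmissible s α β) (hs : 1 < s) :
    β • b 0 - α • b 1 ∈ frontier (extremalBody b s α β ∩ -extremalBody b s α β) := by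
  have hα := h.pos_left hs
  have hp : extremalFunctionals b s α β 1 (β • b 0 - α • b 1) = 1 :=
    (constrL_smul_sub_smul b _ _ _ _).trans (by field_simp; ring)
  exact mem_frontier_of_forall_apply_le (constrL_ne_zero_of_left_ne_zero b one_ne_zero)
    ⟨smul_sub_smul_mem_extremalBody, neg_smul_sub_smul_mem_extremalBody⟩
    fun y hy ↦ (h.extremalFunctionals_one_le_one hs hy.1).trans_eq hp.symm

theorem lineMeet_mem_affineSpan_neg (hαβ : α + β - 1 ≠ 0) :
    lineMeet b α β ∈ affineSpan ℝ {-(β • b 0 - α • b 1), b 1} := by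
  refine mem_affineSpan_pair_iff_exists_lineMap_eq.2 ⟨2 * α / (α + β - 1), ?_⟩
  rw [AffineMap.lineMap_apply_module, lineMeet]
  match_scalars <;> (field_simp; ring)

theorem lineMeet_mem_affineSpan (hαβ : α + β - 1 ≠ 0) :
    lineMeet b α β ∈ affineSpan ℝ {β • b 0 - α • b 1, b 0} := by
  refine mem_affineSpan_pair_iff_exists_lineMap_eq.2 ⟨2 * β / (α + β - 1), ?_⟩
  rw [AffineMap.lineMap_apply_module, lineMeet]
  match_scalars <;> (field_simp; ring)

theorem constrL_eq_of_mem_affineSpan_neg {x : E}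
    (hx : x ∈ affineSpan ℝ {-(β • b 0 - α • b 1), b 1}) :
    b.constrL ![-(1 - α), β] x = β := by
  obtain ⟨r, rfl⟩ := mem_affineSpan_pair_iff_exists_lineMap_eq.1 hx
  simp only [AffineMap.lineMap_apply_module, map_add, map_smul, map_neg, constrL_smul_sub_smul,
    Module.Basis.constrL_basis, Matrix.cons_val, smul_eq_mul]
  ring

theorem constrL_eq_of_mem_affineSpan {x : E}
    (hx : x ∈ affineSpan ℝ {β • b 0 - α • b 1, b 0}) :
    b.constrL ![α, -(1 - β)] x = α := by
  obtain ⟨r, rfl⟩ := mem_affineSpan_pair_iff_exists_lineMap_eq.1 hx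
  simp only [AffineMap.lineMap_apply_module, map_add, map_smul, constrL_smul_sub_smul,
    Module.Basis.constrL_basis, Matrix.cons_val, smul_eq_mul]
  ring

theorem affineSpan_inter_affineSpan_eq_lineMeet (hαβ : α + β - 1 ≠ 0) :
    (affineSpan ℝ {-(β • b 0 - α • b 1), b 1} : Set E) ∩ affineSpan ℝ {β • b 0 - α • b 1, b 0} =
      {lineMeet b α β} := by
  refine eq_singleton_iff_unique_mem.2
    ⟨⟨lineMeet_mem_affineSpan_neg hαβ, lineMeet_mem_affineSpan hαβ⟩, fun x ⟨hx, hx'⟩ ↦ ?_⟩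
  have heq := constrL_eq_of_mem_affineSpan_neg hx
  have heq' := constrL_eq_of_mem_affineSpan hx'
  have hrepr := b.sum_repr x
  rw [Fin.sum_univ_two] at hrepr
  rw [← hrepr, constrL_smul_add_smul] at heq heq'
  rw [← hrepr, lineMeet]
  congr 2
  · rw [eq_div_iff hαβ]
    linear_combination β * heq' + (1 - β) * heq
  · rw [eq_div_iff hαβ]
    linear_combination (1 - α) * heq' + α * heq

theorem IsAdmissible.exists_apex_eq_neg_smul_lineMeet (h : IsAdmissible s α β) (hs : 1 < s) :
    ∃ γ : ℝ, 0 < γ ∧ γ < 1 ∧ apex b s α β = -(γ • lineMeet b α β) := by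
  have hs0 : 0 < s := by linarith
  have hαβ := sub_pos.2 (h.one_lt_add hs)
  have hW := h.add_sub_sq_pos hs
  refine ⟨s * (α + β - 1) / ((α + β) - (α - β) ^ 2), by positivity, ?_, ?_⟩
  · rw [div_lt_one hW]
    nlinarith [h.sq_mul_le, mul_pos (mul_pos hs0 hαβ) (sub_pos.2 hs)]
  · rw [apex, lineMeet, apexCoord, apexCoord, add_comm β α, sub_sq_comm β α]
    match_scalars <;> field_simp

theorem IsAdmissible.constrL_apply_le_mul (h : IsAdmissible s α β) (hs : 1 < s) (hs2 : s ≤ 2)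
    {x : E} (hx : x ∈ extremalBody b s α β) : b.constrL ![s - α, -β] x ≤ s * β := by
  have hαβ := h.le
  have hle := h.le_add_mul hs.le
  have hapex : (s - α) * apexCoord s α β + -β * apexCoord s β α ≤ s * β := by
    have hsum := apexCoord_add_apexCoord s (h.add_sub_sq_pos hs).ne'
    have hle' := h.apexCoord_le hs hs2
    have hcoef : 0 ≤ s - α + β := by linarith
    linear_combination (s - α + β) * hle' + s * hle - β * hsum
  refine constrL_apply_le_of_mem_extremalBody (by linarith) (abs_le.2 ⟨?_, ?_⟩) ?_ ?_ hapex ?_ ?_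
    hx <;> nlinarith

theorem IsAdmissible.neg_mul_le_constrL_apply (h : IsAdmissible s α β) (hs : phiR < s)
    {x : E} (hx : x ∈ extremalBody b s α β) : -(s * (s - α)) ≤ b.constrL ![s - α, -β] x := by
  have hs1 := one_lt_of_phiR_lt hs
  have hαβ := h.le
  have hadd := h.add_le hs
  have hneg : b.constrL ![-(s - α), β] x = -b.constrL ![s - α, -β] x := by
    rw [← b.sum_repr x, Fin.sum_univ_two, constrL_smul_add_smul, constrL_smul_add_smul]
    ring
  have hapex : -(s - α) * apexCoord s α β + β * apexCoord s β α ≤ s * (s - α) := by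
    nlinarith [h.mul_apexCoord_swap_sub_le hs1, h.apexCoord_pos hs1]
  rw [neg_le, ← hneg]
  refine constrL_apply_le_of_mem_extremalBody (by linarith) (abs_le.2 ⟨?_, ?_⟩) ?_ ?_ hapex ?_ ?_
    hx <;> nlinarith

end ExtremalBody

section Tau

theorem tauB_le {K : Set E2} {M : ℝ} (hM : 0 < M) (hK : K ∩ -K ⊆ M • ((2 : ℝ)⁻¹ • (K - K))) :
    tauB K ≤ M :=
  csInf_le ⟨0, fun _ hρ ↦ hρ.1.le⟩ ⟨hM, hK⟩

theorem tauB_eq_of_apply_eq {K : Set E2} {f : StrongDual ℝ E2} {M c : ℝ} (hM : 0 < M)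
    (hK : K ∩ -K ⊆ M • ((2 : ℝ)⁻¹ • (K - K))) (hc : 0 < c)
    (hle : ∀ x ∈ (2 : ℝ)⁻¹ • (K - K), f x ≤ c) {p : E2} (hp : p ∈ K ∩ -K) (hfp : f p = M * c) :
    tauB K = M := by
  refine le_antisymm (tauB_le hM hK) (le_csInf ⟨M, hM, hK⟩ ?_)
  rintro ρ ⟨hρ, hsub⟩
  obtain ⟨x, hx, rfl⟩ := hsub hp
  refine le_of_mul_le_mul_right ?_ hc
  calc M * c = ρ * f x := by rw [← hfp, map_smul, smul_eq_mul]
    _ ≤ ρ * c := mul_le_mul_of_nonneg_left (hle x hx) hρ.le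

variable {b : Module.Basis (Fin 2) ℝ E2} {s α β : ℝ}

theorem IsAdmissible.chordRatio_pos (h : IsAdmissible s α β) (hs : 1 < s) :
    0 < chordRatio s α β :=
  div_pos (by linarith [h.pos_right hs]) (by linarith [h.le])

theorem IsAdmissible.tauB_extremalBody_eq_and_mem_smul_frontier (h : IsAdmissible s α β)
    (hs : phiR < s)
    (hmax : ∀ α' β', IsAdmissible s α' β' → chordRatio s α' β' ≤ chordRatio s α β) :
    tauB (extremalBody b s α β) = chordRatio s α β ∧
      β • b 0 - α • b 1 ∈ chordRatio s α β •
        frontier ((2 : ℝ)⁻¹ • (extremalBody b s α β - extremalBody b s α β)) := by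
  have hs1 := one_lt_of_phiR_lt hs
  have hden : 0 < s + β - α := by linarith [h.le]
  have hM := h.chordRatio_pos hs1
  have hts := h.touchingSystem_extremalBody (b := b) hs1
  have hsub := hts.inter_neg_subset_smul hs finrank_euclideanSpace_fin convex_extremalBody
    zero_mem_extremalBody hmax
  have hp : β • b 0 - α • b 1 ∈ extremalBody b s α β ∩ -extremalBody b s α β :=
    ⟨smul_sub_smul_mem_extremalBody, neg_smul_sub_smul_mem_extremalBody⟩
  have hle : ∀ x ∈ (2 : ℝ)⁻¹ • (extremalBody b s α β - extremalBody b s α β),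
      b.constrL ![s - α, -β] x ≤ (s * β + s * (s - α)) / 2 := fun x hx ↦
    apply_le_of_mem_half_smul_sub (fun y hy ↦ h.constrL_apply_le_mul hs1 hts.le_two hy)
      (fun y hy ↦ h.neg_mul_le_constrL_apply hs hy) hx
  have hfp : b.constrL ![s - α, -β] (β • b 0 - α • b 1) =
      chordRatio s α β * ((s * β + s * (s - α)) / 2) := by
    rw [constrL_smul_sub_smul, chordRatio]
    field_simp
    ring
  have hα : α < s := by linarith [h.le, h.le_one]
  have hc : 0 < (s * β + s * (s - α)) / 2 := by nlinarith
  exact ⟨tauB_eq_of_apply_eq hM hsub hc hle hp hfp,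
    mem_smul_frontier_of_apply_eq (constrL_ne_zero_of_left_ne_zero b (sub_ne_zero.2 hα.ne'))
      hM.ne' hle (hsub hp) hfp⟩

end Tau

theorem stmt10 (K : Set E2) (hK : IsConvexBody K) (hc : MinkCentered K)
    (hs : phiR < minkAsym K) :
    ∃ p p1 p2 p3 : E2, p ∈ frontier K ∩ frontier (-K) ∧
      (let s := minkAsym K
       let Kbar := convexHull ℝ {p, -p, p2, p3, -s • p1, -s • p2, -s • p3}
       MinkCentered Kbar ∧
       WellSpread Kbar p1 p2 p3 ∧
       (∃ d1 : E2,
         (affineSpan ℝ {-p, p3} : Set E2) ∩ (affineSpan ℝ {p, p2} : Set E2) = {d1} ∧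
         ∃ γ : ℝ, 0 < γ ∧ γ < 1 ∧ p1 = -(γ • d1)) ∧
       minkAsym Kbar = minkAsym K ∧
       tauB Kbar ≥ tauB K ∧
       p ∈ frontier (Kbar ∩ (-Kbar)) ∧
       p ∈ tauB Kbar • frontier ((2:ℝ)⁻¹ • (Kbar - Kbar))) := by
  have hs1 := one_lt_of_phiR_lt hs
  obtain ⟨_, _, _, hts⟩ := exists_touchingSystem hK hc hs1
  have h0 := zero_mem_interior_of_subset_smul_neg hK.1 hK.2.2 (zero_lt_one.trans hs1) hc
  obtain ⟨p, hp0, hp⟩ := exists_ne_zero_mem_frontier_inter_frontier_neg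
    (by simp [← Module.finrank_eq_rank]) hK.1 hK.2.1.isBounded h0
  obtain ⟨α, β, h, hmax⟩ := exists_isAdmissible_forall_chordRatio_le hs hts.le_two
  obtain ⟨b, rfl⟩ := exists_basis_eq_smul_sub_smul finrank_euclideanSpace_fin hp0
    (h.pos_left hs1).ne' β
  have htsbar := h.touchingSystem_extremalBody (b := b) hs1
  have hsub := h.extremalBody_subset_smul_neg (b := b) hs1
  have hasym := htsbar.minkAsym_eq (zero_lt_one.trans hs1) hsub
  obtain ⟨htau, hpτ⟩ := h.tauB_extremalBody_eq_and_mem_smul_frontier (b := b) hs hmax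
  have htauK : tauB K ≤ chordRatio (minkAsym K) α β := tauB_le (h.chordRatio_pos hs1)
    (hts.inter_neg_subset_smul hs finrank_euclideanSpace_fin hK.1 (interior_subset h0) hmax)
  refine ⟨_, apex b _ α β, b 0, b 1, hp, hsub.trans_eq (congrArg (· • _) hasym.symm),
    htsbar.wellSpread hs hsub,
    ⟨_, affineSpan_inter_affineSpan_eq_lineMeet (sub_pos.2 (h.one_lt_add hs1)).ne',
      h.exists_apex_eq_neg_smul_lineMeet hs1⟩,
    hasym, htauK.trans_eq htau.symm, h.mem_frontier_extremalBody_inter_neg hs1, htau ▸ hpτ⟩
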